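/- There exist an integer k0 and, for each k >= k0, a real delta = delta(k) > 0 such that for every density r = 2^k * ln 2 - rho with 0 < rho <= 2, m = floor(r*n), and all sufficiently large n, the planted model satisfies Pr_Lambda[ dist(sigma, sigma_MAJ(Phi)) > (1/2 - delta) * n ] <= exp(-2*n*r/(k^9 * 4^k)), where (Phi, sigma) is chosen uniformly at random from the set Lambda of all pairs of a k-CNF formula Phi with m clauses over V and a satisfying assignment sigma of Phi. -/

import Mathlib

open Classical Finset Filter

noncomputable section

/-- A literal: a variable index together with a sign (`true` = positive occurrence). -/
abbrev Lit (n : ℕ) := Fin n × Bool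

/-- A clause: an ordered `k`-tuple of literals. -/
abbrev Clause (n k : ℕ) := Fin k → Lit n

/-- A `k`-CNF formula with `m` clauses over `n` variables. -/
abbrev Formula (n k m : ℕ) := Fin m → Clause n k

/-- A truth assignment. -/
abbrev Assignment (n : ℕ) := Fin n → Bool

/-- The truth value of a literal under an assignment. -/
def litVal {n : ℕ} (σ : Assignment n) (l : Lit n) : Bool :=
  if l.2 then σ l.1 else !(σ l.1)

/-- `σ` satisfies `Φ` if every clause contains at least one true literal. -/
def Satisfies {n k m : ℕ} (σ : Assignment n) (Φ : Formula n k m) : Prop :=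
  ∀ i : Fin m, ∃ j : Fin k, litVal σ (Φ i j) = true

/-- The set of satisfying assignments of `Φ`. -/
def satSet (n k m : ℕ) (Φ : Formula n k m) : Finset (Assignment n) :=
  univ.filter fun σ => Satisfies σ Φ

/-- The number of satisfying assignments of `Φ`. -/
def satCount (n k m : ℕ) (Φ : Formula n k m) : ℕ := (satSet n k m Φ).card

/-- Probability of an event under the uniformly random formula `Φ_k(n,m)`. -/
def prF (n k m : ℕ) (E : Formula n k m → Prop) : ℝ :=
  ((univ.filter fun Φ : Formula n k m => E Φ).card : ℝ) / (Fintype.card (Formula n k m) : ℝ)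

/-- Expectation of a function of the uniformly random formula `Φ_k(n,m)`. -/
def expF (n k m : ℕ) (f : Formula n k m → ℝ) : ℝ :=
  (∑ Φ : Formula n k m, f Φ) / (Fintype.card (Formula n k m) : ℝ)

/-- The number of occurrences of the literal `l` in `Φ`. -/
def occ (n k m : ℕ) (Φ : Formula n k m) (l : Lit n) : ℕ :=
  (univ.filter fun p : Fin m × Fin k => Φ p.1 p.2 = l).card

/-- The (signed) degree sequence of `Φ`. -/
def degSeq (n k m : ℕ) (Φ : Formula n k m) : Lit n → ℕ := occ n k m Φ

/-- Hamming distance between two assignments. -/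
def hdist {n : ℕ} (σ τ : Assignment n) : ℕ :=
  (univ.filter fun x => σ x ≠ τ x).card

/-- The majority-vote assignment: `x ↦ true` iff `x` occurs more often positively
than negatively. -/
def sigmaMaj (n k m : ℕ) (Φ : Formula n k m) : Assignment n :=
  fun x => decide (occ n k m Φ (x, false) < occ n k m Φ (x, true))

/-- The planted model: the set of pairs of a formula and a satisfying assignment. -/
def Planted (n k m : ℕ) : Finset (Formula n k m × Assignment n) :=
  univ.filter fun p => Satisfies p.2 p.1

/-! Fixing which literal occurrences are true turns the planted model into a product: a planted
pair is a truth pattern with a true literal in every clause, together with a uniformly random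
variable in each of the `k * m` slots and a uniformly random assignment. Excluding the all-false
clause gives the true slots an average surplus of about `k * m / 2 ^ k`, which by Chernoff's bound
exceeds `n` but for an exponentially small share of the patterns.

For a balanced pattern, the joint law of the numbers of true and false occurrences of the
variables is at most a polynomial factor times a product of Poisson laws, of means `z` for the
true and `w` for the false occurrences, with `z ≥ w + 1`. Two independent copies of a Poisson
variable of mean `w` coincide with probability of order `1 / √w`, and the surplus true occurrences
settle these ties in favour of the planted value. Hence a majority vote is biased towards the
planted value by a constant depending on `k` alone, and Chernoff's bound over the variables
finishes the proof. -/

section MajoritySign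

/-- The sign of `a - b` as a real number: the outcome, in `{1, 0, -1}`, of a vote with `a` votes in
favour and `b` against. -/
def majoritySign (a b : ℕ) : ℝ := if b < a then 1 else if a < b then -1 else 0

lemma norm_majoritySign_le_one (a b : ℕ) : ‖majoritySign a b‖ ≤ 1 := by
  unfold majoritySign; split_ifs <;> simp

lemma majoritySign_swap (a b : ℕ) : majoritySign b a = -majoritySign a b := by
  unfold majoritySign; split_ifs <;> first | omega | simp

lemma monotone_majoritySign (b : ℕ) : Monotone (majoritySign · b) := by
  intro a a' h
  unfold majoritySign; dsimp only; split_ifs <;> first | omega | norm_num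

lemma majoritySign_add_ite_le_succ (a b : ℕ) :
    majoritySign a b + (if a = b then 1 else 0) ≤ majoritySign (a + 1) b := by
  unfold majoritySign; split_ifs <;> first | omega | norm_num

end MajoritySign

section Collision

open MeasureTheory

lemma sq_measureReal_le_card_mul_measureReal_diagonal {α : Type*} [MeasurableSpace α]
    [MeasurableSingletonClass α] (μ : Measure α) [IsFiniteMeasure μ] (s : Finset α) :
    μ.real s ^ 2 ≤ #s * (μ.prod μ).real (Set.diagonal α) := by
  have sum_sq_eq : ∑ a ∈ s, μ.real {a} ^ 2 = (μ.prod μ).real (s.diag : Set (α × α)) := by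
    rw [← sum_measureReal_singleton, Finset.sum_diag]
    refine sum_congr rfl fun a _ => ?_
    rw [← Set.singleton_prod_singleton, measureReal_prod_prod, sq]
  calc μ.real s ^ 2 = (∑ a ∈ s, μ.real {a}) ^ 2 := by rw [sum_measureReal_singleton]
    _ ≤ #s * ∑ a ∈ s, μ.real {a} ^ 2 := sq_sum_le_card_mul_sum_sq
    _ ≤ #s * (μ.prod μ).real (Set.diagonal α) := by
      rw [sum_sq_eq]
      gcongr
      · exact measure_ne_top _ _
      · intro p hp
        exact (Finset.mem_diag.mp (mem_coe.mp hp)).2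

lemma Icc_ceil_floor_card_le {c L : ℝ} (hc : 0 ≤ c) (hL : 0 ≤ L) :
    (#(Finset.Icc ⌈c - L⌉₊ ⌊c + L⌋₊) : ℝ) ≤ 2 * L + 1 := by
  have hfloor : (⌊c + L⌋₊ : ℝ) ≤ c + L := Nat.floor_le (by positivity)
  have hceil : c - L ≤ ⌈c - L⌉₊ := Nat.le_ceil _
  rw [Nat.card_Icc]
  rcases le_total ⌈c - L⌉₊ (⌊c + L⌋₊ + 1) with h | h
  · rw [Nat.cast_sub h]; push_cast; linarith
  · rw [Nat.sub_eq_zero_of_le h, Nat.cast_zero]; positivity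

lemma half_le_measureReal_Icc_ceil_floor (μ : Measure ℕ) [IsProbabilityMeasure μ] {c L : ℝ}
    (hL : 0 < L) (hint : Integrable (fun a : ℕ => ((a : ℝ) - c) ^ 2) μ)
    (hμ : 2 * ∫ a : ℕ, ((a : ℝ) - c) ^ 2 ∂μ ≤ L ^ 2) :
    1 / 2 ≤ μ.real (Finset.Icc ⌈c - L⌉₊ ⌊c + L⌋₊) := by
  have markov : L ^ 2 * μ.real {a : ℕ | L ^ 2 ≤ ((a : ℝ) - c) ^ 2} ≤
      ∫ a : ℕ, ((a : ℝ) - c) ^ 2 ∂μ :=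
    mul_meas_ge_le_integral_of_nonneg (Eventually.of_forall fun a => sq_nonneg _) hint _
  have tail_subset : (Finset.Icc ⌈c - L⌉₊ ⌊c + L⌋₊ : Set ℕ)ᶜ ⊆
      {a : ℕ | L ^ 2 ≤ ((a : ℝ) - c) ^ 2} := by
    intro a ha
    rw [Set.mem_compl_iff, mem_coe, Finset.mem_Icc, not_and_or, not_le, not_le] at ha
    rw [Set.mem_ofPred_eq, sq_le_sq, abs_of_pos hL, le_abs]
    rcases ha with ha | ha
    · right; linarith [Nat.lt_ceil.mp ha]
    · left; linarith [Nat.lt_of_floor_lt ha]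
  have htail := measureReal_mono (μ := μ) tail_subset
  rw [probReal_compl_eq_one_sub (Finset.measurableSet _)] at htail
  have hL2 : 0 < L ^ 2 := by positivity
  nlinarith

lemma one_div_le_measureReal_diagonal (μ : Measure ℕ) [IsProbabilityMeasure μ] {c L : ℝ}
    (hc : 0 ≤ c) (hL : 0 < L) (hint : Integrable (fun a : ℕ => ((a : ℝ) - c) ^ 2) μ)
    (hμ : 2 * ∫ a : ℕ, ((a : ℝ) - c) ^ 2 ∂μ ≤ L ^ 2) :
    1 / (4 * (2 * L + 1)) ≤ (μ.prod μ).real (Set.diagonal ℕ) := by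
  set I := Finset.Icc ⌈c - L⌉₊ ⌊c + L⌋₊
  have half_le : 1 / 2 ≤ μ.real I := half_le_measureReal_Icc_ceil_floor μ hL hint hμ
  rw [div_le_iff₀ (by positivity)]
  have hsq : (1 / 2 : ℝ) ^ 2 ≤ (2 * L + 1) * (μ.prod μ).real (Set.diagonal ℕ) :=
    calc (1 / 2 : ℝ) ^ 2 ≤ μ.real I ^ 2 := by gcongr
      _ ≤ #I * (μ.prod μ).real (Set.diagonal ℕ) :=
        sq_measureReal_le_card_mul_measureReal_diagonal μ I
      _ ≤ (2 * L + 1) * (μ.prod μ).real (Set.diagonal ℕ) := by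
        gcongr; exact Icc_ceil_floor_card_le hc hL.le
  linarith

end Collision

section Poisson

open MeasureTheory ProbabilityTheory
open scoped NNReal

/-- The Stein-Chen identity `𝔼[X f(X)] = w 𝔼[f(X + 1)]`. -/
lemma hasSum_poissonMeasure_mul_natCast_mul {w : ℝ≥0} {f : ℕ → ℝ} {c : ℝ}
    (hf : HasSum (fun j => (poissonMeasure w).real {j} * f (j + 1)) c) :
    HasSum (fun j => (poissonMeasure w).real {j} * (j * f j)) (w * c) := by
  rw [← hasSum_nat_add_iff' 1]
  simp only [range_one, sum_singleton, Nat.cast_zero, zero_mul, mul_zero, sub_zero]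
  refine (hf.mul_left (w : ℝ)).congr_fun fun j => ?_
  simp only [poissonMeasure_real_singleton, Nat.factorial_succ]
  push_cast
  field_simp
  ring

lemma hasSum_poissonMeasure_mul_sq_sub (w : ℝ≥0) :
    HasSum (fun j : ℕ => (poissonMeasure w).real {j} * ((j : ℝ) - w) ^ 2) w := by
  have mass : HasSum (fun j => (poissonMeasure w).real {j}) 1 := by
    simpa only [poissonMeasure_real_singleton] using hasSum_one_poissonMeasure w
  have mean : HasSum (fun j : ℕ => (poissonMeasure w).real {j} * (j * 1)) (w * 1) :=
    hasSum_poissonMeasure_mul_natCast_mul (f := fun _ => 1) (by simpa only [mul_one] using mass)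
  have second_moment :
      HasSum (fun j : ℕ => (poissonMeasure w).real {j} * (j * j)) (w * (w * 1 + 1)) :=
    hasSum_poissonMeasure_mul_natCast_mul (f := fun j => j) <|
      (mean.add mass).congr_fun fun j => by push_cast; ring
  convert (second_moment.add (mean.mul_left (-2 * (w : ℝ)))).add (mass.mul_left ((w : ℝ) ^ 2))
    using 1
  · ext j; ring
  · ring

lemma integrable_sq_sub_poissonMeasure (w : ℝ≥0) :
    Integrable (fun a : ℕ => ((a : ℝ) - w) ^ 2) (poissonMeasure w) := by
  rw [integrable_poissonMeasure_iff]
  simpa only [← poissonMeasure_real_singleton, norm_pow, Real.norm_eq_abs, sq_abs] using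
    (hasSum_poissonMeasure_mul_sq_sub w).summable

lemma integral_sq_sub_poissonMeasure (w : ℝ≥0) :
    ∫ a : ℕ, ((a : ℝ) - w) ^ 2 ∂poissonMeasure w = w := by
  simp only [integral_poissonMeasure, ← poissonMeasure_real_singleton, smul_eq_mul,
    (hasSum_poissonMeasure_mul_sq_sub w).tsum_eq]

end Poisson

section MajorityGap

open MeasureTheory ProbabilityTheory
open scoped NNReal

lemma integrable_majoritySign {Ω : Type*} [MeasurableSpace Ω] [DiscreteMeasurableSpace Ω]
    [Countable Ω] (μ : Measure Ω) [IsFiniteMeasure μ] (f g : Ω → ℕ) :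
    Integrable (fun ω => majoritySign (f ω) (g ω)) μ :=
  Integrable.of_bound Measurable.of_discrete.aestronglyMeasurable 1
    (Eventually.of_forall fun _ => norm_majoritySign_le_one _ _)

lemma integral_majoritySign_prod_self (μ : Measure ℕ) [SFinite μ] :
    ∫ p, majoritySign p.1 p.2 ∂(μ.prod μ) = 0 := by
  have h := integral_prod_swap (μ := μ) (ν := μ) fun p => majoritySign p.1 p.2
  have hswap (p : ℕ × ℕ) : majoritySign p.swap.1 p.swap.2 = -majoritySign p.1 p.2 :=
    majoritySign_swap _ _
  simp only [hswap, integral_neg] at h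
  linarith

/-- One extra vote decides exactly the ties. -/
lemma measureReal_diagonal_le_integral_majoritySign_add (μ : Measure ℕ) [IsFiniteMeasure μ]
    {e : ℕ} (he : e ≠ 0) :
    (μ.prod μ).real (Set.diagonal ℕ) ≤ ∫ p, majoritySign (e + p.1) p.2 ∂(μ.prod μ) := by
  have hdiag : (μ.prod μ).real (Set.diagonal ℕ) =
      ∫ p, majoritySign p.1 p.2 ∂(μ.prod μ) +
        ∫ p : ℕ × ℕ, (if p.1 = p.2 then 1 else 0) ∂(μ.prod μ) := by
    rw [integral_majoritySign_prod_self, zero_add, ← integral_indicator_one measurableSet_diagonal]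
    exact integral_congr_ae (Eventually.of_forall fun p => by
      simp only [Set.indicator_apply, Set.mem_diagonal_iff, Pi.one_apply])
  have hint := integrable_majoritySign (μ.prod μ) Prod.fst Prod.snd
  have hite : Integrable (fun p : ℕ × ℕ => if p.1 = p.2 then (1 : ℝ) else 0) (μ.prod μ) :=
    Integrable.of_bound Measurable.of_discrete.aestronglyMeasurable 1
      (Eventually.of_forall fun p => by split_ifs <;> simp)
  rw [hdiag, ← integral_add hint hite]
  refine integral_mono (hint.add hite) (integrable_majoritySign _ _ _) fun p => ?_
  exact (majoritySign_add_ite_le_succ p.1 p.2).trans (monotone_majoritySign p.2 (by omega))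

lemma mul_measureReal_diagonal_le_integral_majoritySign_conv (μ ν : Measure ℕ)
    [IsFiniteMeasure μ] [IsProbabilityMeasure ν] :
    (1 - ν.real {0}) * (μ.prod μ).real (Set.diagonal ℕ) ≤
      ∫ p, majoritySign p.1 p.2 ∂((ν ∗ μ).prod μ) := by
  set Ψ : ℕ → ℝ := fun e => ∫ p, majoritySign (e + p.1) p.2 ∂(μ.prod μ)
  have integral_eq : ∫ p, majoritySign p.1 p.2 ∂((ν ∗ μ).prod μ) = ∫ e, Ψ e ∂ν := by
    rw [integral_prod _ (integrable_majoritySign _ _ _), integral_conv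
      (integrable_majoritySign ((ν ∗ μ).prod μ) Prod.fst Prod.snd).integral_prod_left]
    exact integral_congr_ae (Eventually.of_forall fun e =>
      (integral_prod _ (integrable_majoritySign (μ.prod μ) (e + ·.1) (·.2))).symm)
  have indicator_le (e : ℕ) :
      Set.indicator {0}ᶜ (fun _ => (μ.prod μ).real (Set.diagonal ℕ)) e ≤ Ψ e := by
    rcases eq_or_ne e 0 with rfl | he
    · simp only [Set.mem_compl_iff, Set.mem_singleton_iff, not_true_eq_false, not_false_eq_true,
        Set.indicator_of_notMem, Ψ, zero_add, integral_majoritySign_prod_self, le_refl]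
    · rw [Set.indicator_of_mem (by exact he)]
      exact measureReal_diagonal_le_integral_majoritySign_add μ he
  calc (1 - ν.real {0}) * (μ.prod μ).real (Set.diagonal ℕ)
      = ∫ e, Set.indicator {0}ᶜ (fun _ => (μ.prod μ).real (Set.diagonal ℕ)) e ∂ν := by
        rw [integral_indicator_const _ .of_discrete, probReal_compl_eq_one_sub .of_discrete,
          smul_eq_mul]
    _ ≤ ∫ e, Ψ e ∂ν := integral_mono ((integrable_const _).indicator .of_discrete)
        (integrable_majoritySign (ν.prod (μ.prod μ)) (fun q => q.1 + q.2.1)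
          (fun q => q.2.2)).integral_prod_left indicator_le
    _ = _ := integral_eq.symm

lemma poissonMeasure_real_zero_le_half {η : ℝ≥0} (hη : 1 ≤ η) :
    (poissonMeasure η).real {0} ≤ 1 / 2 := by
  have hη' : (1 : ℝ) ≤ η := by exact_mod_cast hη
  calc (poissonMeasure η).real {0} = Real.exp (-η) := by simp [poissonMeasure_real_singleton]
    _ ≤ Real.exp (-1) := by gcongr
    _ ≤ 1 / 2 := by linarith [Real.exp_neg_one_lt_d9]

lemma one_div_le_integral_majoritySign_poisson {z w : ℝ≥0} (hzw : w + 1 ≤ z) {L : ℝ} (hL : 0 < L)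
    (hw : 2 * (w : ℝ) ≤ L ^ 2) :
    1 / (8 * (2 * L + 1)) ≤
      ∫ p, majoritySign p.1 p.2 ∂((poissonMeasure z).prod (poissonMeasure w)) := by
  obtain ⟨η, hη, rfl⟩ : ∃ η, 1 ≤ η ∧ η + w = z :=
    ⟨z - w, le_tsub_of_add_le_left hzw, tsub_add_cancel_of_le (le_self_add.trans hzw)⟩
  have collision : 1 / (4 * (2 * L + 1)) ≤
      ((poissonMeasure w).prod (poissonMeasure w)).real (Set.diagonal ℕ) :=
    one_div_le_measureReal_diagonal _ w.coe_nonneg hL (integrable_sq_sub_poissonMeasure w)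
      (by rwa [integral_sq_sub_poissonMeasure])
  rw [← poissonMeasure_conv_poissonMeasure]
  calc 1 / (8 * (2 * L + 1)) = (1 - 1 / 2) * (1 / (4 * (2 * L + 1))) := by field_simp; norm_num
    _ ≤ (1 - (poissonMeasure η).real {0}) * _ := by
      gcongr
      · linarith [poissonMeasure_real_zero_le_half hη]
      · exact poissonMeasure_real_zero_le_half hη
    _ ≤ _ := mul_measureReal_diagonal_le_integral_majoritySign_conv _ _

end MajorityGap

section MajorityTilt

open MeasureTheory ProbabilityTheory
open scoped NNReal

/-- The factor by which a variable with `a` true and `b` false occurrences contributes to the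
exponential moment of the number of majority errors: the average of `exp (± γ)`, with sign `+` for
an error of the vote, over the two values of the variable. A tie is resolved in favour of one
value, so exactly one of the two values is misjudged. -/
def majorityTilt (γ : ℝ) (a b : ℕ) : ℝ := Real.cosh γ - majoritySign a b * Real.sinh γ

lemma majorityTilt_nonneg {γ : ℝ} (hγ : 0 ≤ γ) (a b : ℕ) : 0 ≤ majorityTilt γ a b := by
  have hsign : majoritySign a b ≤ 1 := (le_abs_self _).trans (norm_majoritySign_le_one a b)
  have hsinh : 0 ≤ Real.sinh γ := Real.sinh_nonneg_iff.mpr hγ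
  have := Real.sinh_lt_cosh γ
  unfold majorityTilt
  nlinarith

lemma integrable_majorityTilt (γ : ℝ) (μ : Measure (ℕ × ℕ)) [IsFiniteMeasure μ] :
    Integrable (fun p => majorityTilt γ p.1 p.2) μ :=
  (integrable_const _).sub ((integrable_majoritySign μ _ _).mul_const _)

lemma integral_majorityTilt (γ : ℝ) (μ : Measure (ℕ × ℕ)) [IsProbabilityMeasure μ] :
    ∫ p, majorityTilt γ p.1 p.2 ∂μ =
      Real.cosh γ - (∫ p, majoritySign p.1 p.2 ∂μ) * Real.sinh γ := by
  unfold majorityTilt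
  rw [integral_sub (integrable_const _) ((integrable_majoritySign μ _ _).mul_const _),
    integral_const, probReal_univ, one_smul, integral_mul_const]

lemma cosh_pow_le_one_add {k : ℕ} {l : ℝ} (h : k * l ^ 2 ≤ 2) :
    Real.cosh l ^ k ≤ 1 + k * l ^ 2 := by
  have hx : 0 ≤ k * (l ^ 2 / 2) := by positivity
  have hexp := (abs_le.mp (Real.abs_exp_sub_one_sub_id_le (x := k * (l ^ 2 / 2))
    (by rw [abs_of_nonneg hx]; linarith))).2
  calc Real.cosh l ^ k ≤ Real.exp (l ^ 2 / 2) ^ k :=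
        pow_le_pow_left₀ (Real.cosh_pos l).le (Real.cosh_le_exp_half_sq l) k
    _ = Real.exp (k * (l ^ 2 / 2)) := (Real.exp_nat_mul _ k).symm
    _ ≤ 1 + k * l ^ 2 := by nlinarith

lemma cosh_sub_mul_sinh_le_exp_neg_sq {γ d : ℝ} (hγ₀ : 0 ≤ γ) (hγ₁ : γ ≤ 1) (hd : 2 * γ ≤ d) :
    Real.cosh γ - d * Real.sinh γ ≤ Real.exp (-γ ^ 2) := by
  have hγ2 : γ ^ 2 ≤ 1 := pow_le_one₀ hγ₀ hγ₁
  have hcosh : Real.cosh γ ≤ 1 + γ ^ 2 := by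
    simpa only [pow_one, Nat.cast_one, one_mul] using
      cosh_pow_le_one_add (k := 1) (l := γ) (by rw [Nat.cast_one]; linarith)
  have hsinh : 2 * γ * γ ≤ d * Real.sinh γ :=
    mul_le_mul hd (Real.self_le_sinh_iff.mpr hγ₀) hγ₀ (by linarith)
  linarith [Real.add_one_le_exp (-γ ^ 2)]

lemma integral_majorityTilt_poisson_le {z w : ℝ≥0} (hzw : w + 1 ≤ z) {L : ℝ} (hL : 0 < L)
    (hw : 2 * (w : ℝ) ≤ L ^ 2) {γ : ℝ} (hγ₀ : 0 ≤ γ) (hγ : 16 * (2 * L + 1) * γ ≤ 1) :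
    ∫ p, majorityTilt γ p.1 p.2 ∂((poissonMeasure z).prod (poissonMeasure w)) ≤
      Real.exp (-γ ^ 2) := by
  rw [integral_majorityTilt]
  refine cosh_sub_mul_sinh_le_exp_neg_sq hγ₀ (by nlinarith) ?_
  refine le_trans ?_ (one_div_le_integral_majoritySign_poisson hzw hL hw)
  rw [le_div_iff₀ (by positivity)]
  linarith

end MajorityTilt

section Occupancy

/-- The occupancy numbers of a map: `fiberCard v x` is the number of points mapped to `x`. -/
def fiberCard {S ι : Type*} [Fintype S] [DecidableEq ι] (v : S → ι) (x : ι) : ℕ := #{s | v s = x}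

/-- The occupancy numbers of a map on a coloured set: `labelCount τ v t x` is the number of points
of colour `t` mapped to `x`. With literal slots coloured by truth values and `v` placing variables
into the slots, this counts the true, respectively false, occurrences of the variable `x`. -/
def labelCount {S κ ι : Type*} [Fintype S] [DecidableEq κ] [DecidableEq ι]
    (τ : S → κ) (v : S → ι) (t : κ) (x : ι) : ℕ :=
  #{s | τ s = t ∧ v s = x}

variable {S κ ι : Type*} [Fintype S] [Fintype ι] [DecidableEq ι]

lemma sum_fiberCard (v : S → ι) : ∑ x, fiberCard v x = Fintype.card S :=
  (card_eq_sum_card_fiberwise fun _ _ => mem_coe.mpr (mem_univ _)).symm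

lemma prod_comp_eq_prod_pow_fiberCard {M : Type*} [CommMonoid M] (v : S → ι) (y : ι → M) :
    ∏ s, y (v s) = ∏ x, y x ^ fiberCard v x := by
  simp only [fiberCard, ← prod_const, ← prod_fiberwise univ v fun s => y (v s)]
  refine prod_congr rfl fun x _ => prod_congr rfl fun s hs => ?_
  rw [(mem_filter.mp hs).2]

variable [DecidableEq S]

/-- Compare the coefficients of the monomial with exponents `A` in the two expansions of
`(∑ x, X x) ^ |S|`. -/
lemma card_fiberCard_eq_multinomial {A : ι → ℕ} (hA : ∑ x, A x = Fintype.card S) :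
    #{v : S → ι | fiberCard v = A} = Nat.multinomial univ A := by
  have expand : ∑ v : S → ι, ∏ x, (MvPolynomial.X x : MvPolynomial ι ℕ) ^ fiberCard v x =
      ∑ B ∈ piAntidiag univ (Fintype.card S),
        (Nat.multinomial univ B : MvPolynomial ι ℕ) * ∏ x, MvPolynomial.X x ^ B x := by
    rw [← sum_pow_eq_sum_piAntidiag, ← card_univ (α := S), ← prod_const, prod_univ_sum,
      Fintype.piFinset_univ]
    exact sum_congr rfl fun v _ => (prod_comp_eq_prod_pow_fiberCard v _).symm
  have prod_X_pow (B : ι → ℕ) : ∏ x, (MvPolynomial.X x : MvPolynomial ι ℕ) ^ B x =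
      MvPolynomial.monomial (Finsupp.equivFunOnFinite.symm B) 1 := by
    rw [MvPolynomial.monomial_eq, Finsupp.prod_fintype _ _ (by simp only [pow_zero, implies_true])]
    simp only [map_one, one_mul, Finsupp.equivFunOnFinite_symm_apply_apply]
  have coeff_eq := congrArg (MvPolynomial.coeff (Finsupp.equivFunOnFinite.symm A)) expand
  simp only [prod_X_pow, MvPolynomial.coeff_sum, MvPolynomial.coeff_monomial,
    ← map_natCast (MvPolynomial.C (R := ℕ) (σ := ι)), MvPolynomial.coeff_C_mul,
    EmbeddingLike.apply_eq_iff_eq, mul_ite, mul_one, mul_zero] at coeff_eq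
  rw [sum_ite_eq', if_pos (mem_piAntidiag.mpr ⟨hA, fun x _ => mem_univ x⟩), sum_boole] at coeff_eq
  exact_mod_cast coeff_eq

lemma card_labelCount_eq_prod [Fintype κ] [DecidableEq κ] (τ : S → κ) (A : κ → ι → ℕ) :
    #{v : S → ι | labelCount τ v = A} =
      ∏ t, #{u : {s // τ s = t} → ι | fiberCard u = A t} := by
  have hcount (v : S → ι) (t : κ) :
      labelCount τ v t = fiberCard fun s : {s // τ s = t} => v s := by
    ext x
    simp only [labelCount, fiberCard, ← Fintype.card_subtype]
    exact Fintype.card_congr (Equiv.subtypeSubtypeEquivSubtypeInter _ _).symm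
  rw [← Fintype.card_piFinset]
  refine card_equiv (((Equiv.sigmaFiberEquiv τ).symm.arrowCongr (Equiv.refl ι)).trans
    (Equiv.piCurry fun _ _ => ι)) fun v => ?_
  simp only [mem_filter, mem_univ, true_and, Fintype.mem_piFinset, funext_iff (f := labelCount τ v),
    hcount]
  rfl

end Occupancy

section Poissonization

open MeasureTheory ProbabilityTheory
open scoped NNReal Nat

lemma factorial_mul_exp_le (N : ℕ) :
    (N ! : ℝ) * Real.exp N ≤ Real.exp 1 * (N + 1) * (N : ℝ) ^ N := by
  rcases N with _ | N
  · simp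
  have hfact : ((N + 1)! : ℝ) = Stirling.stirlingSeq (N + 1) *
      (√(2 * (N + 1 : ℕ)) * ((N + 1 : ℕ) / Real.exp 1) ^ (N + 1)) := by
    rw [Stirling.stirlingSeq, div_mul_cancel₀ _ (by positivity)]
  have hanti : Stirling.stirlingSeq (N + 1) ≤ Real.exp 1 / √2 :=
    (Stirling.stirlingSeq'_antitone N.zero_le).trans_eq Stirling.stirlingSeq_one
  have hsqrt : √((N + 1 : ℕ) : ℝ) ≤ (N + 1 : ℕ) + 1 := by
    rw [Real.sqrt_le_iff]; constructor <;> nlinarith [(N + 1).cast_nonneg (α := ℝ)]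
  calc ((N + 1)! : ℝ) * Real.exp (N + 1 : ℕ)
      ≤ Real.exp 1 / √2 * (√(2 * (N + 1 : ℕ)) * ((N + 1 : ℕ) / Real.exp 1) ^ (N + 1)) *
          Real.exp (N + 1 : ℕ) := by rw [hfact]; gcongr
    _ = Real.exp 1 * √((N + 1 : ℕ) : ℝ) * ((N + 1 : ℕ) : ℝ) ^ (N + 1) := by
      rw [Real.sqrt_mul zero_le_two, div_pow, Real.exp_one_pow]
      field_simp
    _ ≤ _ := by gcongr

lemma sum_prod_le_mul_integral_pow {V ι α : Type*} [Fintype V] [Fintype ι] [MeasurableSpace α]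
    [MeasurableSingletonClass α] [DecidableEq α] (ρ : Measure α) [IsFiniteMeasure ρ] {K : ℝ}
    (hK : 0 ≤ K) {f : V → ι → α} (hf : ∀ c, (#{v | f v = c} : ℝ) ≤ K * ∏ x, ρ.real {c x})
    {g : α → ℝ} (hg : ∀ a, 0 ≤ g a) (hint : Integrable g ρ) :
    ∑ v, ∏ x, g (f v x) ≤ K * (∫ a, g a ∂ρ) ^ Fintype.card ι := by
  set G : (ι → α) → ℝ := fun c => ∏ x, g (c x)
  have hG (c : ι → α) : 0 ≤ G c := prod_nonneg fun x _ => hg _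
  have hGint : Integrable G (Measure.pi fun _ => ρ) := Integrable.fintype_prod fun _ => hint
  calc ∑ v, G (f v) = ∑ c ∈ univ.image f, #{v | f v = c} * G c := by
        simp only [sum_comp G f, nsmul_eq_mul]
    _ ≤ ∑ c ∈ univ.image f, K * ((Measure.pi fun _ => ρ).real {c} * G c) := by
        refine sum_le_sum fun c _ => ?_
        rw [← mul_assoc, measureReal_def, Measure.pi_singleton, ENNReal.toReal_prod]
        exact mul_le_mul_of_nonneg_right (hf c) (hG c)
    _ = K * ∫ c in (univ.image f : Finset (ι → α)), G c ∂(Measure.pi fun _ => ρ) := by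
        simp only [← mul_sum, setIntegral_finset _ hGint.integrableOn, smul_eq_mul]
    _ ≤ K * ∫ c, G c ∂(Measure.pi fun _ => ρ) :=
        mul_le_mul_of_nonneg_left
          (setIntegral_le_integral hGint (Eventually.of_forall hG)) hK
    _ = _ := by rw [integral_fintype_prod_eq_pow]

variable {ι : Type*} [Fintype ι] [Nonempty ι]

lemma pow_mul_prod_poissonMeasure {N : ℕ} {A : ι → ℕ} (hA : ∑ x, A x = N) :
    (Fintype.card ι : ℝ) ^ N * ∏ x, (poissonMeasure (N / Fintype.card ι)).real {A x} =
      (N : ℝ) ^ N / (Real.exp N * ∏ x, ((A x)! : ℝ)) := by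
  have hι : (Fintype.card ι : ℝ) ≠ 0 := Nat.cast_ne_zero.mpr Fintype.card_ne_zero
  simp only [poissonMeasure_real_singleton, prod_div_distrib, prod_mul_distrib, prod_const,
    prod_pow_eq_pow_sum, hA, card_univ, ← Real.exp_nat_mul]
  push_cast
  rw [mul_neg, mul_div_cancel₀ _ hι, Real.exp_neg, div_pow]
  field_simp

variable {S : Type*} [Fintype S] [DecidableEq S] [DecidableEq ι]

lemma card_fiberCard_le_prod_poissonMeasure (A : ι → ℕ) :
    (#{v : S → ι | fiberCard v = A} : ℝ) ≤
      Real.exp 1 * (Fintype.card S + 1) * (Fintype.card ι : ℝ) ^ Fintype.card S *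
        ∏ x, (poissonMeasure (Fintype.card S / Fintype.card ι)).real {A x} := by
  by_cases hA : ∑ x, A x = Fintype.card S
  · have hmult : (#{v : S → ι | fiberCard v = A} : ℝ) =
        (Fintype.card S)! / ∏ x, ((A x)! : ℝ) := by
      rw [card_fiberCard_eq_multinomial hA, eq_div_iff (by positivity), ← hA]
      exact_mod_cast (mul_comm _ _).trans (Nat.multinomial_spec univ A)
    calc (#{v : S → ι | fiberCard v = A} : ℝ)
        = (Fintype.card S)! * Real.exp (Fintype.card S) /
            (Real.exp (Fintype.card S) * ∏ x, ((A x)! : ℝ)) := by rw [hmult]; field_simp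
      _ ≤ Real.exp 1 * (Fintype.card S + 1) * (Fintype.card S : ℝ) ^ Fintype.card S /
            (Real.exp (Fintype.card S) * ∏ x, ((A x)! : ℝ)) :=
        div_le_div_of_nonneg_right (factorial_mul_exp_le _) (by positivity)
      _ = _ := by rw [mul_assoc _ (_ ^ _), pow_mul_prod_poissonMeasure hA, mul_div_assoc']
  · have hempty : #{v : S → ι | fiberCard v = A} = 0 :=
      card_filter_eq_zero_iff.mpr fun v _ hv => hA (hv ▸ sum_fiberCard v)
    rw [hempty, Nat.cast_zero]
    positivity

lemma card_labelCount_le_prod_poissonMeasure {κ : Type*} [Fintype κ] [DecidableEq κ] (τ : S → κ)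
    (A : κ → ι → ℕ) :
    (#{v : S → ι | labelCount τ v = A} : ℝ) ≤
      (Fintype.card ι : ℝ) ^ Fintype.card S *
        ∏ t, (Real.exp 1 * (#{s | τ s = t} + 1) *
          ∏ x, (poissonMeasure (#{s | τ s = t} / Fintype.card ι)).real {A t x}) := by
  have card_eq (t : κ) : Fintype.card {s // τ s = t} = #{s | τ s = t} := Fintype.card_subtype _
  have sum_card : ∑ t, #{s | τ s = t} = Fintype.card S := sum_fiberCard τ
  rw [card_labelCount_eq_prod, ← sum_card, ← prod_pow_eq_pow_sum, ← prod_mul_distrib, Nat.cast_prod]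
  refine prod_le_prod (fun _ _ => Nat.cast_nonneg _) fun t _ => ?_
  refine (card_fiberCard_le_prod_poissonMeasure (A t)).trans_eq ?_
  rw [card_eq]
  ring

lemma sum_prod_labelCount_le (τ : S → Bool) {g : ℕ × ℕ → ℝ} (hg : ∀ p, 0 ≤ g p)
    (hint : Integrable g ((poissonMeasure (#{s | τ s = true} / Fintype.card ι)).prod
      (poissonMeasure (#{s | τ s = false} / Fintype.card ι)))) :
    ∑ v : S → ι, ∏ x, g (labelCount τ v true x, labelCount τ v false x) ≤
      (Fintype.card ι : ℝ) ^ Fintype.card S * (Real.exp 1 * (Fintype.card S + 1)) ^ 2 *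
        (∫ p, g p ∂((poissonMeasure (#{s | τ s = true} / Fintype.card ι)).prod
          (poissonMeasure (#{s | τ s = false} / Fintype.card ι)))) ^ Fintype.card ι := by
  refine sum_prod_le_mul_integral_pow _ (by positivity)
    (f := fun v x => (labelCount τ v true x, labelCount τ v false x)) (fun c => ?_) hg hint
  have hiff (v : S → ι) : (fun x => (labelCount τ v true x, labelCount τ v false x)) = c ↔
      labelCount τ v = fun t x => if t then (c x).1 else (c x).2 := by
    simp only [funext_iff, Prod.ext_iff, Bool.forall_bool, forall_and, if_true, and_comm,
      Bool.false_eq_true, if_false]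
  have hprod (x : ι) : ((poissonMeasure (#{s | τ s = true} / Fintype.card ι)).prod
      (poissonMeasure (#{s | τ s = false} / Fintype.card ι))).real {c x} =
        (poissonMeasure (#{s | τ s = true} / Fintype.card ι)).real {(c x).1} *
          (poissonMeasure (#{s | τ s = false} / Fintype.card ι)).real {(c x).2} := by
    rw [← measureReal_prod_prod, Set.singleton_prod_singleton]
  simp only [hiff, hprod]
  refine (card_labelCount_le_prod_poissonMeasure τ _).trans ?_
  rw [Fintype.prod_bool, prod_mul_distrib]
  simp only [if_true, Bool.false_eq_true, if_false]
  rw [mul_mul_mul_comm, mul_assoc _ (_ ^ 2), sq (Real.exp 1 * _)]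
  have hfactor (t : Bool) : Real.exp 1 * ((#{s | τ s = t} : ℝ) + 1) ≤
      Real.exp 1 * (Fintype.card S + 1) := by
    gcongr; exact card_le_univ _
  refine mul_le_mul_of_nonneg_left (mul_le_mul_of_nonneg_right
    (mul_le_mul (hfactor true) (hfactor false) (by positivity) (by positivity))
    (by positivity)) (by positivity)

end Poissonization

section MajorityErrors

open MeasureTheory ProbabilityTheory
open scoped NNReal

lemma card_filter_lt_le_exp_mul_sum {Ω : Type*} (s : Finset Ω) (X : Ω → ℝ) (c : ℝ) {l : ℝ}
    (hl : 0 ≤ l) :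
    (#{ω ∈ s | c < X ω} : ℝ) ≤ Real.exp (-(l * c)) * ∑ ω ∈ s, Real.exp (l * X ω) := by
  rw [← sum_boole, mul_sum]
  refine sum_le_sum fun ω _ => ?_
  rw [← Real.exp_add]
  split_ifs with h
  · exact Real.one_le_exp (by nlinarith)
  · exact Real.exp_nonneg _

/-- Majority voting errs on a variable of value `s` that has `a` true and `b` false occurrences.
The two values of `s` differ in whether a tie is an error, as the vote resolves ties to `false`. -/
def MajorityErrs (s : Bool) (a b : ℕ) : Prop := if s then a ≤ b else a < b

lemma sum_exp_majorityErrs (γ : ℝ) (a b : ℕ) :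
    ∑ s, Real.exp (γ * (if MajorityErrs s a b then 1 else -1)) = 2 * majorityTilt γ a b := by
  simp only [Fintype.sum_bool, MajorityErrs, majorityTilt, majoritySign, Real.cosh_eq,
    Real.sinh_eq, if_true, Bool.false_eq_true, if_false]
  rcases lt_trichotomy a b with h | rfl | h
  · simp only [h, h.le, h.not_gt, if_true, if_false, mul_one]
    ring
  · simp only [le_rfl, lt_irrefl, if_true, if_false, mul_one, mul_neg]
    ring
  · simp only [h, h.not_ge, h.not_gt, if_true, if_false, mul_neg, mul_one]
    ring

variable {S ι : Type*} [Fintype S] [Fintype ι] [DecidableEq ι]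

/-- The number of variables on which majority voting errs, when the variables `v` are placed into
literal slots with truth values `τ` and the planted assignment is `σ`. -/
def errorCount (τ : S → Bool) (v : S → ι) (σ : ι → Bool) : ℕ :=
  #{x | MajorityErrs (σ x) (labelCount τ v true x) (labelCount τ v false x)}

lemma sum_exp_errorCount (τ : S → Bool) (v : S → ι) (γ : ℝ) :
    ∑ σ, Real.exp (γ * (2 * errorCount τ v σ - Fintype.card ι)) =
      2 ^ Fintype.card ι *
        ∏ x, majorityTilt γ (labelCount τ v true x) (labelCount τ v false x) := by
  have signed (σ : ι → Bool) : 2 * (errorCount τ v σ : ℝ) - Fintype.card ι =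
      ∑ x, (if MajorityErrs (σ x) (labelCount τ v true x) (labelCount τ v false x)
        then 1 else -1) := by
    rw [errorCount, ← sum_boole, ← card_univ, card_eq_sum_ones, Nat.cast_sum, mul_sum,
      ← sum_sub_distrib]
    refine sum_congr rfl fun x _ => ?_
    split_ifs <;> norm_num
  simp only [signed, mul_sum, Real.exp_sum]
  rw [← card_univ, ← prod_const, ← prod_mul_distrib, ← Fintype.prod_sum fun x s => Real.exp
    (γ * (if MajorityErrs s (labelCount τ v true x) (labelCount τ v false x) then 1 else -1))]
  simp only [sum_exp_majorityErrs]

variable [DecidableEq S] [Nonempty ι]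

lemma sum_prod_majorityTilt_labelCount_le (τ : S → Bool) {L γ : ℝ} (hL : 0 < L) (hγ₀ : 0 ≤ γ)
    (hγ : 16 * (2 * L + 1) * γ ≤ 1)
    (hbalance : #{s | τ s = false} + Fintype.card ι ≤ #{s | τ s = true})
    (hfalse : 2 * (#{s | τ s = false} : ℝ) ≤ L ^ 2 * Fintype.card ι) :
    ∑ v : S → ι, ∏ x, majorityTilt γ (labelCount τ v true x) (labelCount τ v false x) ≤
      (Fintype.card ι : ℝ) ^ Fintype.card S * (Real.exp 1 * (Fintype.card S + 1)) ^ 2 *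
        Real.exp (-γ ^ 2) ^ Fintype.card ι := by
  have hι : (0 : ℝ) < Fintype.card ι := Nat.cast_pos.mpr Fintype.card_pos
  have hι' : (0 : ℝ≥0) < Fintype.card ι := Nat.cast_pos.mpr Fintype.card_pos
  set z : ℝ≥0 := #{s | τ s = true} / Fintype.card ι
  set w : ℝ≥0 := #{s | τ s = false} / Fintype.card ι
  have hzw : w + 1 ≤ z := by
    rw [le_div_iff₀ hι', add_mul, div_mul_cancel₀ _ hι'.ne', one_mul]
    exact_mod_cast hbalance
  have hw : 2 * (w : ℝ) ≤ L ^ 2 := by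
    rw [NNReal.coe_div, NNReal.coe_natCast, NNReal.coe_natCast, ← mul_div_assoc, div_le_iff₀ hι]
    exact hfalse
  have hmean₀ : 0 ≤ ∫ p, majorityTilt γ p.1 p.2 ∂((poissonMeasure z).prod (poissonMeasure w)) :=
    integral_nonneg fun p => majorityTilt_nonneg hγ₀ _ _
  refine (sum_prod_labelCount_le (ι := ι) τ (g := fun p => majorityTilt γ p.1 p.2)
    (fun p => majorityTilt_nonneg hγ₀ _ _) (integrable_majorityTilt γ _)).trans ?_
  gcongr
  exact integral_majorityTilt_poisson_le hzw hL hw hγ₀ hγ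

lemma card_lt_errorCount_le (τ : S → Bool) {L γ : ℝ} (hL : 0 < L) (hγ₀ : 0 ≤ γ)
    (hγ : 16 * (2 * L + 1) * γ ≤ 1)
    (hbalance : #{s | τ s = false} + Fintype.card ι ≤ #{s | τ s = true})
    (hfalse : 2 * (#{s | τ s = false} : ℝ) ≤ L ^ 2 * Fintype.card ι) :
    (#{q : (S → ι) × (ι → Bool) |
        (1 / 2 - γ / 4) * Fintype.card ι < errorCount τ q.1 q.2} : ℝ) ≤
      2 ^ Fintype.card ι * (Fintype.card ι : ℝ) ^ Fintype.card S *
        ((Real.exp 1 * (Fintype.card S + 1)) ^ 2 *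
          Real.exp (-(γ ^ 2 / 2 * Fintype.card ι))) := by
  have hchernoff := card_filter_lt_le_exp_mul_sum univ
    (fun q : (S → ι) × (ι → Bool) => 2 * (errorCount τ q.1 q.2 : ℝ) - Fintype.card ι)
    (-(γ / 2 * Fintype.card ι)) hγ₀
  simp only [Fintype.sum_prod_type, sum_exp_errorCount, ← mul_sum] at hchernoff
  have hexp : Real.exp (-(γ * -(γ / 2 * Fintype.card ι))) * Real.exp (-γ ^ 2) ^ Fintype.card ι =
      Real.exp (-(γ ^ 2 / 2 * Fintype.card ι)) := by
    rw [← Real.exp_nat_mul, ← Real.exp_add]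
    ring_nf
  calc (#{q : (S → ι) × (ι → Bool) |
          (1 / 2 - γ / 4) * Fintype.card ι < errorCount τ q.1 q.2} : ℝ)
      ≤ _ := Nat.cast_le.mpr (card_le_card (monotone_filter_right _ fun q _ hq => by linarith))
    _ ≤ _ := hchernoff
    _ ≤ Real.exp (-(γ * -(γ / 2 * Fintype.card ι))) * (2 ^ Fintype.card ι *
          ((Fintype.card ι : ℝ) ^ Fintype.card S * (Real.exp 1 * (Fintype.card S + 1)) ^ 2 *
            Real.exp (-γ ^ 2) ^ Fintype.card ι)) := by
      gcongr
      exact sum_prod_majorityTilt_labelCount_le τ hL hγ₀ hγ hbalance hfalse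
    _ = _ := by rw [← hexp]; ring

end MajorityErrors

section TruthPatterns

/-- A truth pattern, recording which of the `k` literals of each of `m` clauses are true, is
satisfying if every clause has a true literal. -/
def IsSatPattern {m k : ℕ} (τ : Fin m → Fin k → Bool) : Prop := ∀ i, ∃ j, τ i j = true

lemma filter_isSatPattern (m k : ℕ) :
    univ.filter (fun τ : Fin m → Fin k → Bool => IsSatPattern τ) =
      Fintype.piFinset fun _ => univ.erase fun _ => false := by
  ext τ
  rw [mem_filter, IsSatPattern]
  simp only [mem_univ, true_and, Fintype.mem_piFinset, mem_erase, and_true, ne_eq, funext_iff,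
    not_forall, Bool.not_eq_false]

lemma card_isSatPattern (m k : ℕ) :
    (#{τ : Fin m → Fin k → Bool | IsSatPattern τ} : ℝ) = (2 ^ k - 1) ^ m := by
  rw [filter_isSatPattern, Fintype.card_piFinset, prod_const, card_erase_of_mem (mem_univ _),
    card_univ, card_univ, Fintype.card_fun, Fintype.card_bool, Fintype.card_fin, Fintype.card_fin,
    Nat.cast_pow, Nat.cast_sub Nat.one_le_two_pow]
  norm_num

lemma sum_exp_clause_ne_false (k : ℕ) (l : ℝ) :
    ∑ c ∈ univ.erase (fun _ : Fin k => false), ∏ j, Real.exp (l * (if c j then -1 else 1)) =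
      (2 * Real.cosh l) ^ k - Real.exp (k * l) := by
  have hall : ∑ c : Fin k → Bool, ∏ j, Real.exp (l * (if c j then -1 else 1)) =
      (2 * Real.cosh l) ^ k := by
    rw [← Fintype.sum_pow fun s : Bool => Real.exp (l * (if s then -1 else 1))]
    simp only [Fintype.sum_bool, if_true, Bool.false_eq_true, if_false, Real.cosh_eq, mul_neg,
      mul_one]
    ring
  rw [eq_sub_iff_add_eq, ← hall, ← sum_erase_add _ _ (mem_univ fun _ : Fin k => false)]
  simp only [Bool.false_eq_true, if_false, mul_one, prod_const, card_univ, Fintype.card_fin,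
    Real.exp_nat_mul]

/-- Excluding the all-false clause shifts the mean surplus of true literals in a clause from `0` to
`k / (2 ^ k - 1)`; a `3/4` share of it survives the second-order term. -/
lemma sum_exp_clause_ne_false_le (k : ℕ) {l : ℝ} (hl₀ : 0 ≤ l) (hl : 4 * 2 ^ k * l ≤ 1) :
    ∑ c ∈ univ.erase (fun _ : Fin k => false), ∏ j, Real.exp (l * (if c j then -1 else 1)) ≤
      (2 ^ k - 1) * Real.exp (-(3 / 4 * l * k / 2 ^ k)) := by
  have hpow : (1 : ℝ) ≤ 2 ^ k := one_le_pow₀ one_le_two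
  have hk : (k : ℝ) ≤ 2 ^ k := by exact_mod_cast Nat.lt_two_pow_self.le
  have hkl₀ : 0 ≤ k * l := by positivity
  have hsecond : (2 : ℝ) ^ k * (k * l ^ 2) ≤ 1 / 4 * (k * l) := by nlinarith
  have hcosh : (2 * Real.cosh l) ^ k ≤ 2 ^ k * (1 + k * l ^ 2) := by
    rw [mul_pow]
    gcongr
    exact cosh_pow_le_one_add (by nlinarith)
  have hshift₀ : 0 ≤ 3 / 4 * l * k / 2 ^ k := by positivity
  calc ∑ c ∈ univ.erase (fun _ : Fin k => false), ∏ j, Real.exp (l * (if c j then -1 else 1))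
      = (2 * Real.cosh l) ^ k - Real.exp (k * l) := sum_exp_clause_ne_false k l
    _ ≤ 2 ^ k - 1 - 3 / 4 * l * k := by linarith [Real.add_one_le_exp (k * l)]
    _ = (2 ^ k - 1) - 2 ^ k * (3 / 4 * l * k / 2 ^ k) := by
      rw [mul_div_cancel₀ _ (by positivity)]
    _ ≤ (2 ^ k - 1) * (1 - 3 / 4 * l * k / 2 ^ k) := by linarith
    _ ≤ _ := mul_le_mul_of_nonneg_left (Real.one_sub_le_exp_neg _) (by linarith)

lemma sum_exp_isSatPattern_le (m k : ℕ) {l : ℝ} (hl₀ : 0 ≤ l) (hl : 4 * 2 ^ k * l ≤ 1) :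
    ∑ τ : Fin m → Fin k → Bool with IsSatPattern τ,
        Real.exp (l * (#{p : Fin m × Fin k | τ p.1 p.2 = false} -
          #{p : Fin m × Fin k | τ p.1 p.2 = true})) ≤
      (2 ^ k - 1) ^ m * Real.exp (-(3 / 4 * l * (m * k) / 2 ^ k)) := by
  have signed (τ : Fin m → Fin k → Bool) :
      l * ((#{p : Fin m × Fin k | τ p.1 p.2 = false} : ℝ) -
        #{p : Fin m × Fin k | τ p.1 p.2 = true}) =
      ∑ i, ∑ j, l * (if τ i j then -1 else 1) := by
    rw [← sum_boole, ← sum_boole, ← sum_sub_distrib, mul_sum, Fintype.sum_prod_type]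
    refine sum_congr rfl fun i _ => sum_congr rfl fun j _ => ?_
    cases τ i j <;> norm_num
  simp only [signed, Real.exp_sum]
  rw [filter_isSatPattern, ← prod_univ_sum (fun _ => univ.erase fun _ => false)
    fun _ c => ∏ j, Real.exp (l * (if c j then -1 else 1)), prod_const, card_univ, Fintype.card_fin]
  refine (pow_le_pow_left₀ (sum_nonneg fun c _ => by positivity)
    (sum_exp_clause_ne_false_le k hl₀ hl) m).trans_eq ?_
  rw [mul_pow, ← Real.exp_nat_mul]
  ring_nf

/-- Chernoff's bound at `l = 1 / (4 * 2 ^ k)`. -/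
lemma card_isSatPattern_unbalanced_le {m k n : ℕ} (hn : 2 ^ (k + 1) * n ≤ m * k) :
    (#{τ : Fin m → Fin k → Bool | IsSatPattern τ ∧
        ¬ #{p : Fin m × Fin k | τ p.1 p.2 = false} + n ≤
          #{p : Fin m × Fin k | τ p.1 p.2 = true}} : ℝ) ≤
      (2 ^ k - 1) ^ m * Real.exp (-(n / (8 * 2 ^ k))) := by
  have hpow : (1 : ℝ) ≤ 2 ^ k := one_le_pow₀ one_le_two
  set l : ℝ := 1 / (4 * 2 ^ k) with hl
  have hl₀ : 0 ≤ l := by positivity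
  have hn' : 2 * (n : ℝ) ≤ m * k / 2 ^ k := by
    rw [le_div_iff₀ (by positivity)]
    have : (2 : ℝ) * 2 ^ k * n ≤ m * k := by rw [← pow_succ']; exact_mod_cast hn
    linarith
  have hchernoff := card_filter_lt_le_exp_mul_sum ({τ | IsSatPattern τ})
    (fun τ : Fin m → Fin k → Bool => (#{p : Fin m × Fin k | τ p.1 p.2 = false} : ℝ) -
      #{p : Fin m × Fin k | τ p.1 p.2 = true}) (-n) hl₀
  calc (#{τ : Fin m → Fin k → Bool | IsSatPattern τ ∧
          ¬ #{p : Fin m × Fin k | τ p.1 p.2 = false} + n ≤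
            #{p : Fin m × Fin k | τ p.1 p.2 = true}} : ℝ)
      ≤ _ := by
        rw [← filter_filter]
        refine Nat.cast_le.mpr (card_le_card (monotone_filter_right _ fun τ _ hτ => ?_))
        have : (#{p : Fin m × Fin k | τ p.1 p.2 = true} : ℝ) <
            #{p : Fin m × Fin k | τ p.1 p.2 = false} + n := by exact_mod_cast not_le.mp hτ
        linarith
    _ ≤ _ := hchernoff
    _ ≤ Real.exp (-(l * -n)) *
          ((2 ^ k - 1) ^ m * Real.exp (-(3 / 4 * l * (m * k) / 2 ^ k))) := by
      gcongr
      exact sum_exp_isSatPattern_le m k hl₀ (by rw [hl]; field_simp; rfl)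
    _ = (2 ^ k - 1) ^ m * Real.exp (l * n - 3 / 4 * l * (m * k / 2 ^ k)) := by
      rw [mul_left_comm, ← Real.exp_add]
      ring_nf
    _ ≤ _ := by
      have hrate : l * n - 3 / 4 * l * (m * k / 2 ^ k) ≤ -(l / 2 * n) := by nlinarith
      refine mul_le_mul_of_nonneg_left (Real.exp_le_exp.mpr (hrate.trans_eq ?_))
        (pow_nonneg (by linarith) m)
      rw [hl]
      ring

end TruthPatterns

section PlantedModel

variable {n k m : ℕ}

/-- A formula together with an assignment is the same as the truth values of its literal
occurrences, the variables they are placed on, and the assignment. Under this encoding, whether the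
assignment satisfies the formula depends on the truth values alone. -/
def truthPatternEquiv (n k m : ℕ) : Formula n k m × Assignment n ≃
    (Fin m → Fin k → Bool) × ((Fin m × Fin k → Fin n) × (Fin n → Bool)) where
  toFun q := (fun i j => litVal q.2 (q.1 i j), fun p => (q.1 p.1 p.2).1, q.2)
  invFun q := (fun i j => (q.2.1 (i, j), q.1 i j == q.2.2 (q.2.1 (i, j))), q.2.2)
  left_inv q := by
    obtain ⟨Φ, σ⟩ := q
    refine Prod.ext (funext fun i => funext fun j => Prod.ext rfl ?_) rfl
    simp only [litVal]
    cases (Φ i j).2 <;> cases σ (Φ i j).1 <;> rfl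
  right_inv q := by
    obtain ⟨τ, v, σ⟩ := q
    refine Prod.ext (funext fun i => funext fun j => ?_) rfl
    simp only [litVal]
    cases τ i j <;> cases σ (v (i, j)) <;> rfl

lemma labelCount_litVal (Φ : Formula n k m) (σ : Assignment n) (t : Bool) (x : Fin n) :
    labelCount (fun p : Fin m × Fin k => litVal σ (Φ p.1 p.2)) (fun p => (Φ p.1 p.2).1) t x =
      occ n k m Φ (x, t == σ x) := by
  rw [labelCount, occ]
  congr 1
  ext p
  rw [mem_filter, mem_filter, Prod.ext_iff, litVal, and_comm (a := _ = t)]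
  refine and_congr_right fun _ => and_congr_right fun hx => ?_
  rw [hx]
  cases (Φ p.1 p.2).2 <;> cases σ x <;> cases t <;> simp

lemma hdist_sigmaMaj (Φ : Formula n k m) (σ : Assignment n) :
    hdist σ (sigmaMaj n k m Φ) =
      errorCount (fun p : Fin m × Fin k => litVal σ (Φ p.1 p.2)) (fun p => (Φ p.1 p.2).1) σ := by
  rw [hdist, errorCount]
  congr 1
  ext x
  rw [mem_filter, mem_filter, labelCount_litVal, labelCount_litVal, sigmaMaj, MajorityErrs]
  cases h : σ x <;> simp

lemma card_planted (n k m : ℕ) :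
    (#(Planted n k m) : ℝ) = (2 ^ k - 1) ^ m * (2 ^ n * (n : ℝ) ^ (m * k)) := by
  have hcard : #(Planted n k m) =
      #((univ.filter fun τ : Fin m → Fin k → Bool => IsSatPattern τ) ×ˢ
        (univ : Finset ((Fin m × Fin k → Fin n) × (Fin n → Bool)))) := by
    refine card_equiv (truthPatternEquiv n k m) fun q => ?_
    rw [Planted, mem_filter, mem_product, mem_filter]
    simp only [mem_univ, true_and, and_true]
    rfl
  rw [hcard, card_product, Nat.cast_mul, card_isSatPattern]
  simp only [card_univ, Fintype.card_prod, Fintype.card_fun, Fintype.card_fin, Fintype.card_bool,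
    Nat.cast_mul, Nat.cast_pow, Nat.cast_ofNat]
  ring

lemma card_planted_far_eq_sum (n k m : ℕ) (c : ℝ) :
    (#{q ∈ Planted n k m | c < (hdist q.2 (sigmaMaj n k m q.1) : ℝ)} : ℝ) =
      ∑ τ : Fin m → Fin k → Bool with IsSatPattern τ,
        (#{q : (Fin m × Fin k → Fin n) × (Fin n → Bool) |
          c < (errorCount (fun p => τ p.1 p.2) q.1 q.2 : ℝ)} : ℝ) := by
  rw [← Nat.cast_sum, ← card_sigma]
  congr 1
  refine card_equiv ((truthPatternEquiv n k m).trans (Equiv.sigmaEquivProd _ _).symm) fun q => ?_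
  rw [Planted, mem_filter, mem_filter, mem_sigma, mem_filter, mem_filter, hdist_sigmaMaj]
  simp only [mem_univ, true_and]
  rfl

end PlantedModel

section MajorityVote

/-- The probability that, in the planted model, the majority vote is at distance more than
`(1 / 2 - δ) * n` from the planted assignment. -/
def majorityFarProb (n k m : ℕ) (δ : ℝ) : ℝ :=
  (#{q ∈ Planted n k m | (1 / 2 - δ) * n < (hdist q.2 (sigmaMaj n k m q.1) : ℝ)} : ℝ) /
    (#(Planted n k m) : ℝ)

variable {n k m : ℕ}

lemma card_lt_errorCount_le_of_balanced [NeZero n] (τ : Fin m → Fin k → Bool) {L γ : ℝ}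
    (hL : 0 < L) (hγ₀ : 0 ≤ γ) (hγ : 16 * (2 * L + 1) * γ ≤ 1) (hm : m * k ≤ L ^ 2 * n)
    (hτ : #{p : Fin m × Fin k | τ p.1 p.2 = false} + n ≤
      #{p : Fin m × Fin k | τ p.1 p.2 = true}) :
    (#{q : (Fin m × Fin k → Fin n) × (Fin n → Bool) |
        (1 / 2 - γ / 4) * n < (errorCount (fun p => τ p.1 p.2) q.1 q.2 : ℝ)} : ℝ) ≤
      2 ^ n * (n : ℝ) ^ (m * k) *
        ((Real.exp 1 * (m * k + 1)) ^ 2 * Real.exp (-(γ ^ 2 / 2 * n))) := by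
  have hcard : Fintype.card (Fin m × Fin k) = m * k := by
    rw [Fintype.card_prod, Fintype.card_fin, Fintype.card_fin]
  have htotal : #{p : Fin m × Fin k | τ p.1 p.2 = true} +
      #{p : Fin m × Fin k | τ p.1 p.2 = false} = m * k := by
    rw [← hcard, ← sum_fiberCard fun p : Fin m × Fin k => τ p.1 p.2, Fintype.sum_bool]
    rfl
  have hfalse : 2 * (#{p : Fin m × Fin k | τ p.1 p.2 = false} : ℝ) ≤ L ^ 2 * n :=
    le_trans (by exact_mod_cast (by lia)) hm
  have key := card_lt_errorCount_le (ι := Fin n) (fun p : Fin m × Fin k => τ p.1 p.2) hL hγ₀ hγ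
  simp only [Fintype.card_fin, hcard, Nat.cast_mul] at key
  exact key hτ hfalse

lemma majorityFarProb_le_add (hn : 0 < n) {L γ : ℝ} (hL : 0 < L) (hγ₀ : 0 ≤ γ)
    (hγ : 16 * (2 * L + 1) * γ ≤ 1) (hlow : 2 ^ (k + 1) * n ≤ m * k) (hm : m * k ≤ L ^ 2 * n) :
    majorityFarProb n k m (γ / 4) ≤ Real.exp (-(n / (8 * 2 ^ k))) +
      (Real.exp 1 * (m * k + 1)) ^ 2 * Real.exp (-(γ ^ 2 / 2 * n)) := by
  have : NeZero n := ⟨hn.ne'⟩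
  have hk : k ≠ 0 := right_ne_zero_of_mul (lt_of_lt_of_le (by positivity) hlow : 0 < m * k).ne'
  have hpow : (1 : ℝ) < 2 ^ k := one_lt_pow₀ one_lt_two hk
  set Q : ℝ := 2 ^ n * (n : ℝ) ^ (m * k)
  set E : ℝ := (Real.exp 1 * (m * k + 1)) ^ 2 * Real.exp (-(γ ^ 2 / 2 * n))
  have hQ : 0 < Q := by positivity
  have hpattern (τ : Fin m → Fin k → Bool) :
      (#{q : (Fin m × Fin k → Fin n) × (Fin n → Bool) |
        (1 / 2 - γ / 4) * n < (errorCount (fun p => τ p.1 p.2) q.1 q.2 : ℝ)} : ℝ) ≤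
      Q * (if ¬ #{p : Fin m × Fin k | τ p.1 p.2 = false} + n ≤
        #{p : Fin m × Fin k | τ p.1 p.2 = true} then 1 else 0) + Q * E := by
    split_ifs with hτ
    · rw [mul_zero, zero_add]
      exact card_lt_errorCount_le_of_balanced τ hL hγ₀ hγ hm hτ
    · refine (Nat.cast_le.mpr (card_le_univ _)).trans ?_
      simp only [Fintype.card_prod, Fintype.card_fun, Fintype.card_fin, Fintype.card_bool]
      push_cast
      have : 0 ≤ Q * E := by positivity
      linarith
  rw [majorityFarProb, card_planted, div_le_iff₀ (by have := sub_pos.mpr hpow; positivity),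
    card_planted_far_eq_sum]
  refine (sum_le_sum fun τ _ => hpattern τ).trans ?_
  rw [sum_add_distrib, ← mul_sum, sum_boole, filter_filter, sum_const, nsmul_eq_mul,
    card_isSatPattern]
  linarith [mul_le_mul_of_nonneg_left (card_isSatPattern_unbalanced_le hlow) hQ.le]

/-- `majorityFarProb_le_add` with `L = √D` and `γ = 1 / (40 * √D)`. -/
lemma majorityFarProb_le_sq_mul_exp {D : ℝ} (hn : 0 < n) (hlow : 2 ^ (k + 1) * n ≤ m * k)
    (hm : m * k ≤ D * n) :
    majorityFarProb n k m (1 / (160 * √D)) ≤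
      9 * (D * n + 1) ^ 2 * Real.exp (-(n / (3200 * D))) := by
  have hn' : (0 : ℝ) < n := Nat.cast_pos.mpr hn
  have hk : k ≠ 0 := right_ne_zero_of_mul (lt_of_lt_of_le (by positivity) hlow : 0 < m * k).ne'
  have hpow : (2 : ℝ) ≤ 2 ^ k := le_self_pow₀ one_le_two hk
  have hDpow : 2 * 2 ^ k ≤ D := by
    rw [← pow_succ', ← mul_le_mul_iff_left₀ hn']
    exact le_trans (by exact_mod_cast hlow) hm
  have hL : 2 ≤ √D := Real.le_sqrt_of_sq_le (by linarith)
  have hsq : √D ^ 2 = D := Real.sq_sqrt (by linarith)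
  have hD : 0 < D := by linarith
  have hγ : 16 * (2 * √D + 1) * (1 / (40 * √D)) ≤ 1 := by
    rw [mul_one_div, div_le_one (by positivity)]
    linarith
  have hδ : 1 / (160 * √D) = 1 / (40 * √D) / 4 := by
    rw [div_div]
    ring_nf
  have hpattern : Real.exp (-(n / (8 * 2 ^ k))) ≤ Real.exp (-(n / (3200 * D))) := by
    gcongr <;> linarith
  have hrate : (1 / (40 * √D)) ^ 2 / 2 * n = n / (3200 * D) := by
    rw [div_pow, mul_pow, hsq]
    ring
  have hexp : Real.exp 1 ^ 2 ≤ 8 := by nlinarith [Real.exp_one_lt_d9, Real.exp_pos 1]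
  have hone : 1 ≤ (D * n + 1) ^ 2 := one_le_pow₀ (by nlinarith)
  rw [hδ]
  calc majorityFarProb n k m (1 / (40 * √D) / 4)
      ≤ Real.exp (-(n / (8 * 2 ^ k))) +
          (Real.exp 1 * (m * k + 1)) ^ 2 * Real.exp (-((1 / (40 * √D)) ^ 2 / 2 * n)) :=
        majorityFarProb_le_add hn (by linarith) (by positivity) hγ hlow (by rwa [hsq])
    _ ≤ Real.exp (-(n / (3200 * D))) +
          8 * (D * n + 1) ^ 2 * Real.exp (-(n / (3200 * D))) := by
      rw [hrate, mul_pow]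
      gcongr
    _ ≤ _ := by nlinarith [Real.exp_pos (-(n / (3200 * D)))]

lemma eventually_mul_sq_le_exp (c a : ℝ) {b : ℝ} (hb : 0 < b) :
    ∀ᶠ x : ℝ in atTop, c * (a * x + 1) ^ 2 ≤ Real.exp (b * x) := by
  have hpow (j : ℕ) := isLittleO_pow_exp_pos_mul_atTop j hb
  have hquad := (((hpow 2).const_mul_left (c * a ^ 2)).add
    ((hpow 1).const_mul_left (2 * c * a))).add ((hpow 0).const_mul_left c)
  filter_upwards [hquad.bound one_pos] with x hx
  rw [one_mul, Real.norm_of_nonneg (Real.exp_nonneg _)] at hx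
  refine le_trans (le_of_eq ?_) ((le_abs_self _).trans hx)
  ring

lemma two_pow_succ_mul_le_floor_mul {r : ℝ} (hn : 0 < n) (hr : 4 * 2 ^ k ≤ k * r) :
    2 ^ (k + 1) * n ≤ ⌊r * n⌋₊ * k := by
  have hn' : (1 : ℝ) ≤ n := by exact_mod_cast hn
  have hk : (k : ℝ) ≤ 2 ^ k := by exact_mod_cast Nat.lt_two_pow_self.le
  have hfloor := mul_le_mul_of_nonneg_right (Nat.lt_floor_add_one (r * n)).le k.cast_nonneg
  have hlow := mul_le_mul_of_nonneg_right hr n.cast_nonneg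
  have : (2 : ℝ) * 2 ^ k * n ≤ ⌊r * n⌋₊ * k := by nlinarith
  rw [← pow_succ'] at this
  exact_mod_cast this

lemma two_mul_mul_div_le_div {r : ℝ} (hk : 4 ≤ k) (hr : r ≤ 2 ^ k) :
    2 * n * r / ((k : ℝ) ^ 9 * 4 ^ k) ≤ n / (6400 * (k * 2 ^ k)) := by
  have hk₈ : (12800 : ℝ) ≤ k ^ 8 :=
    le_trans (by norm_num) (pow_le_pow_left₀ (by norm_num) (Nat.ofNat_le_cast.mpr hk) 8)
  have hfour : (4 : ℝ) ^ k = 2 ^ k * 2 ^ k := by rw [← mul_pow]; norm_num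
  calc 2 * n * r / ((k : ℝ) ^ 9 * 4 ^ k) ≤ 2 * n * 2 ^ k / (12800 * k * 4 ^ k) := by
        rw [pow_succ]
        gcongr
    _ = _ := by rw [hfour]; field_simp; ring

end MajorityVote

theorem statement19_general {k : ℕ} (hk : 4 ≤ k) :
    ∃ δ : ℝ, 0 < δ ∧ ∃ N : ℕ, ∀ n : ℕ, N ≤ n → ∀ r : ℝ, 4 * 2 ^ k ≤ k * r → r ≤ 2 ^ k →
      majorityFarProb n k ⌊r * (n : ℝ)⌋₊ δ ≤ Real.exp (-2 * n * r / ((k : ℝ) ^ 9 * 4 ^ k)) := by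
  have hk₀ : (0 : ℝ) < k := by positivity
  set D : ℝ := k * 2 ^ k
  obtain ⟨N, hN⟩ := eventually_atTop.mp (tendsto_natCast_atTop_atTop.eventually
    (eventually_mul_sq_le_exp 9 D (b := 1 / (6400 * D)) (by positivity)))
  refine ⟨1 / (160 * √D), by positivity, max N 1, fun n hn r hrlow hrhigh => ?_⟩
  have hn₀ : 0 < n := le_of_max_le_right hn
  have hr₀ : 0 ≤ r := nonneg_of_mul_nonneg_right (le_trans (by positivity) hrlow) hk₀
  have hm : (⌊r * n⌋₊ : ℝ) * k ≤ D * n := by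
    calc (⌊r * n⌋₊ : ℝ) * k ≤ r * n * k := by gcongr; exact Nat.floor_le (by positivity)
      _ ≤ 2 ^ k * n * k := by gcongr
      _ = D * n := by ring
  calc majorityFarProb n k ⌊r * n⌋₊ (1 / (160 * √D))
      ≤ 9 * (D * n + 1) ^ 2 * Real.exp (-(n / (3200 * D))) :=
        majorityFarProb_le_sq_mul_exp hn₀ (two_pow_succ_mul_le_floor_mul hn₀ hrlow) hm
    _ ≤ Real.exp (1 / (6400 * D) * n) * Real.exp (-(n / (3200 * D))) := by
        gcongr
        exact hN n (le_of_max_le_left hn)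
    _ = Real.exp (-(n / (6400 * D))) := by
        rw [← Real.exp_add]
        ring_nf
    _ ≤ _ := by
        rw [neg_mul, neg_mul, neg_div]
        exact Real.exp_le_exp.mpr (neg_le_neg (two_mul_mul_div_le_div hk hrhigh))

lemma two_pow_mul_log_two_sub_mem_Icc {k : ℕ} (hk : 8 ≤ k) {rho : ℝ} (hpos : 0 < rho)
    (hle : rho ≤ 2) :
    4 * 2 ^ k ≤ k * (2 ^ k * Real.log 2 - rho) ∧ 2 ^ k * Real.log 2 - rho ≤ 2 ^ k := by
  have hpow : (256 : ℝ) ≤ 2 ^ k :=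
    le_trans (by norm_num) (pow_le_pow_right₀ one_le_two hk)
  have hk' : (8 : ℝ) ≤ k := Nat.ofNat_le_cast.mpr hk
  have hhalf : (2 : ℝ) ^ k / 2 ≤ 2 ^ k * Real.log 2 - rho := by
    nlinarith [Real.log_two_gt_d9]
  constructor <;> nlinarith [Real.log_two_lt_d9]

/-- There is `k0` and, for each `k ≥ k0`, some `δ = δ(k) > 0` such that
for every `r = 2^k ln 2 - ρ` with `0 < ρ ≤ 2` and all large `n`, under the uniform
distribution on the planted model,
`Pr[dist(σ, σ_MAJ(Φ)) > (1/2 - δ) n] ≤ exp(-2 n r/(k^9 4^k))`. -/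
theorem statement19 :
    ∃ k0 : ℕ, ∀ k : ℕ, k0 ≤ k → ∃ δ : ℝ, 0 < δ ∧
      ∀ rho : ℝ, 0 < rho → rho ≤ 2 →
        ∃ N : ℕ, ∀ n : ℕ, N ≤ n →
          let r := 2 ^ k * Real.log 2 - rho
          let m := ⌊r * (n : ℝ)⌋₊
          (((Planted n k m).filter fun p : Formula n k m × Assignment n =>
              (1 / 2 - δ) * n < (hdist p.2 (sigmaMaj n k m p.1) : ℝ)).card : ℝ) /
            ((Planted n k m).card : ℝ) ≤
            Real.exp (-2 * n * r / ((k : ℝ) ^ 9 * 4 ^ k)) := by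
  refine ⟨8, fun k hk => ?_⟩
  obtain ⟨δ, hδ, N, hN⟩ := statement19_general (k := k) (by lia)
  refine ⟨δ, hδ, fun rho hpos hle => ⟨N, fun n hn => ?_⟩⟩
  obtain ⟨hlow, hhigh⟩ := two_pow_mul_log_two_sub_mem_Icc hk hpos hle
  exact hN n hn _ hlow hhigh
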